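/- arXiv:1908.01954 — 2 statements merged into one kernel-verified Lean document; each statement's English description precedes it below -/
import Mathlib

section
/- Let d ≥ 3, u > 0. There exists T₀(u) ∈ (0,1) such that for all 0 < T < T₀, the expected number of open self-avoiding paths of length n starting at the origin in FI^{u,T} is at most (2d)^n·(2(3d)^{-n} + (3d)^{-n-1}), which tends to 0 as n → ∞; consequently the origin is almost surely not in an infinite cluster of FI^{u,T}. -/
open MeasureTheory Real Filter ENNReal

noncomputable section

/-- A finite path in `ℤ^d`: a length `n` together with `n+1` vertices. -/
abbrev PrePath (d : ℕ) := Σ n : ℕ, (Fin (n + 1) → (Fin d → ℤ))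

/-- The path is nearest-neighbor. -/
def IsNN {d : ℕ} (w : PrePath d) : Prop :=
  ∀ i : Fin w.1, (∑ j, |w.2 i.succ j - w.2 i.castSucc j|) = 1

/-- The (countable) space of finite nearest-neighbor walks in `ℤ^d`. -/
abbrev W (d : ℕ) := {w : PrePath d // IsNN w}

/-- Intensity of the FRI point process at a single walk `w`:
`u·v^{(T)}({w}) = u · (2d/(T+1)) · (1/(T+1)) (T/(T+1))^{len w} (2d)^{-len w}`. -/
def intensity (d : ℕ) (u T : ℝ) (w : W d) : ℝ :=
  u * (2 * d / (T + 1) ^ 2) * (T / ((T + 1) * (2 * d))) ^ w.1.1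

/-- `μ` is the law of the FRI point process `FI^{u,T}`: the counts of the individual walks
are independent Poisson random variables with means `u·v^{(T)}({w})`. -/
def IsFRI (d : ℕ) (u T : ℝ) (μ : Measure (W d → ℕ)) : Prop :=
  IsProbabilityMeasure μ ∧
  ∀ F : Finset (W d), ∀ g : W d → ℕ,
    μ {ω | ∀ w ∈ F, ω w = g w} =
      ∏ w ∈ F, ENNReal.ofReal
        (Real.exp (-intensity d u T w) * (intensity d u T w) ^ g w / (Nat.factorial (g w)))

/-- `w` crosses the edge `{a, b}`. -/
def Crosses {d : ℕ} (w : W d) (a b : Fin d → ℤ) : Prop :=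
  ∃ i : Fin w.1.1, (w.1.2 i.castSucc = a ∧ w.1.2 i.succ = b) ∨
    (w.1.2 i.castSucc = b ∧ w.1.2 i.succ = a)

/-- The edge `{a,b}` is open in the configuration `ω` iff some trajectory crosses it. -/
def OpenEdge {d : ℕ} (ω : W d → ℕ) (a b : Fin d → ℤ) : Prop :=
  ∃ w : W d, 1 ≤ ω w ∧ Crosses w a b

/-- The open cluster of the origin in the bond configuration induced by `ω`. -/
def Cluster {d : ℕ} (ω : W d → ℕ) : Set (Fin d → ℤ) :=
  {v | Relation.ReflTransGen (OpenEdge ω) 0 v}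

/-- Self-avoiding nearest-neighbor path of length `n` from the origin (no edge used twice). -/
def IsSAP (d n : ℕ) (p : Fin (n + 1) → (Fin d → ℤ)) : Prop :=
  p 0 = 0 ∧
  (∀ i : Fin n, (∑ j, |p i.succ j - p i.castSucc j|) = 1) ∧
  ∀ i j : Fin n, i ≠ j →
    ¬((p i.castSucc = p j.castSucc ∧ p i.succ = p j.succ) ∨
      (p i.castSucc = p j.succ ∧ p i.succ = p j.castSucc))

/-- The number `N(n)` of open self-avoiding paths of length `n` from the origin. -/
def openSAPcount (d n : ℕ) (ω : W d → ℕ) : ℕ :=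
  {p : Fin (n + 1) → (Fin d → ℤ) | IsSAP d n p ∧
    ∀ i : Fin n, OpenEdge ω (p i.castSucc) (p i.succ)}.ncard

/-!
If a path of length `n` using no edge twice is open, then finitely many distinct present
trajectories cover it; a trajectory of length `ℓ` covers at most `ℓ` of its edges, so the lengths of
these trajectories add up to at least `n`. A finite set `S` of trajectories is present with
probability at most `∏ w ∈ S, λ w`, where `λ w` is the intensity of `w`. Hence, for `y ≥ 1`, a union
bound over the finite sets `S` of trajectories hitting the path shows that it is open with
probability at most
`y ^ (-n) * ∑ S, ∏ w ∈ S, λ w * y ^ |w| ≤ y ^ (-n) * exp (∑ w, λ w * y ^ |w|)`.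
At most `(m + 1) * (2 * d) ^ m` walks of length `m` pass through a given vertex, so for small `T`
the exponent on the right is at most `n`. With `y = 3 * d * e` the path is open with probability at
most `(3 * d) ^ (-n)`. The rest is Peierls' argument: at most `(2 * d) ^ n` paths of length `n`
start at the origin, and an infinite cluster contains an open one for every `n`.
-/

open ProbabilityTheory
open scoped NNReal

theorem exists_eq_single_of_sum_abs_eq_one {ι : Type*} [Fintype ι] [DecidableEq ι] {v : ι → ℤ}
    (hv : ∑ j, |v j| = 1) : ∃ i, ∃ ε : ℤˣ, v = Pi.single i (ε : ℤ) := by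
  obtain ⟨i, hi⟩ : ∃ i, v i ≠ 0 := by
    by_contra! h
    simp [h] at hv
  have hsplit := Finset.add_sum_erase Finset.univ (fun j => |v j|) (Finset.mem_univ i)
  have hrest_nonneg : 0 ≤ ∑ j ∈ Finset.univ.erase i, |v j| :=
    Finset.sum_nonneg fun _ _ => abs_nonneg _
  have hi_one : 1 ≤ |v i| := Int.one_le_abs hi
  have hrest : ∑ j ∈ Finset.univ.erase i, |v j| = 0 := by omega
  obtain ⟨ε, hε⟩ : IsUnit (v i) := Int.isUnit_iff_abs_eq.2 (by omega)
  rw [Finset.sum_eq_zero_iff_of_nonneg fun _ _ => abs_nonneg _] at hrest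
  refine ⟨i, ε, funext fun j => ?_⟩
  obtain rfl | hj := eq_or_ne j i
  · simp [hε]
  · simpa [hj] using hrest j (Finset.mem_erase.2 ⟨hj, Finset.mem_univ j⟩)

theorem encard_sum_abs_eq_one_le (ι : Type*) [Fintype ι] :
    {v : ι → ℤ | ∑ j, |v j| = 1}.encard ≤ 2 * Fintype.card ι := by
  classical
  calc {v : ι → ℤ | ∑ j, |v j| = 1}.encard
      ≤ (Set.range fun q : ι × ℤˣ => (Pi.single q.1 (q.2 : ℤ) : ι → ℤ)).encard := by
        refine Set.encard_le_encard fun v hv => ?_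
        obtain ⟨i, ε, rfl⟩ := exists_eq_single_of_sum_abs_eq_one hv
        exact ⟨(i, ε), rfl⟩
    _ ≤ (Set.univ : Set (ι × ℤˣ)).encard := by
        rw [← Set.image_univ]
        exact Set.encard_image_le _ _
    _ = 2 * Fintype.card ι := by simp [Set.encard_univ, mul_comm]

theorem finite_sum_abs_lt {ι : Type*} [Fintype ι] (n : ℤ) :
    {v : ι → ℤ | ∑ j, |v j| < n}.Finite := by
  classical
  refine (Set.finite_Icc (fun _ => -n) fun _ => n).subset fun v hv => ?_
  have hcoord (j : ι) : |v j| ≤ n :=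
    (Finset.single_le_sum (f := fun j => |v j|) (fun _ _ => abs_nonneg _)
      (Finset.mem_univ j)).trans (le_of_lt hv)
  exact ⟨fun j => (abs_le.1 (hcoord j)).1, fun j => (abs_le.1 (hcoord j)).2⟩

theorem encard_paths_le {G : Type*} [AddGroup G] (S : Set G) {n : ℕ} (k : Fin (n + 1)) (a : G) :
    {w : Fin (n + 1) → G | (∀ i : Fin n, w i.succ - w i.castSucc ∈ S) ∧ w k = a}.encard ≤
      S.encard ^ n := by
  have hpi : (Set.univ.pi fun _ : Fin n => S).encard = S.encard ^ n := by
    simp [Set.encard_pi_eq_prod_encard]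
  rw [← hpi]
  refine Set.encard_le_encard_of_injOn (f := fun w i => w i.succ - w i.castSucc)
    (fun w hw i _ => hw.1 i) fun w hw w' hw' hsteps => ?_
  have hconst (j : Fin (n + 1)) : -w' j + w j = -w' 0 + w 0 := by
    induction j using Fin.induction with
    | zero => rfl
    | succ i ih =>
      have hstep : w i.succ - w i.castSucc = w' i.succ - w' i.castSucc := congrFun hsteps i
      rw [← ih, ← sub_add_cancel (w i.succ) (w i.castSucc), hstep, sub_eq_add_neg]
      simp only [add_assoc, neg_add_cancel_left]
  have hzero : -w' 0 + w 0 = 0 := by rw [← hconst k, hw.2, hw'.2, neg_add_cancel]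
  exact funext fun j => (neg_add_eq_zero.1 ((hconst j).trans hzero)).symm

theorem tsum_finset_prod_le_exp {ι : Type*} {f : ι → ℝ≥0∞} {c : ℝ} (hc : 0 ≤ c)
    (hf : ∑' i, f i ≤ ENNReal.ofReal c) :
    ∑' s : Finset ι, ∏ i ∈ s, f i ≤ ENNReal.ofReal (exp c) := by
  classical
  lift f to ι → ℝ≥0 using ENNReal.ne_top_of_tsum_ne_top (ne_top_of_le_ne_top ofReal_ne_top hf)
  have hsum (t : Finset ι) : ∑ i ∈ t, (f i : ℝ) ≤ c := by
    rw [← ENNReal.ofReal_le_ofReal_iff hc, ENNReal.ofReal_sum_of_nonneg fun i _ => (f i).coe_nonneg]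
    simpa using (ENNReal.sum_le_tsum t).trans hf
  refine ENNReal.summable.tsum_le_of_sum_le fun 𝓢 => ?_
  have hsub : 𝓢 ⊆ (𝓢.sup id).powerset := fun s hs =>
    Finset.mem_powerset.2 (Finset.le_sup (f := id) hs)
  calc ∑ s ∈ 𝓢, ∏ i ∈ s, (f i : ℝ≥0∞)
      ≤ ∑ s ∈ (𝓢.sup id).powerset, ∏ i ∈ s, (f i : ℝ≥0∞) := Finset.sum_le_sum_of_subset hsub
    _ = ENNReal.ofReal (∏ i ∈ 𝓢.sup id, (1 + (f i : ℝ))) := by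
        rw [← Finset.prod_one_add, ENNReal.ofReal_prod_of_nonneg fun i _ => by positivity]
        refine Finset.prod_congr rfl fun i _ => ?_
        rw [ENNReal.ofReal_add zero_le_one (f i).coe_nonneg]
        simp
    _ ≤ ENNReal.ofReal (exp c) := ENNReal.ofReal_le_ofReal <|
        (prod_one_add_le_exp_sum _ fun i => (f i).coe_nonneg).trans (exp_le_exp.2 (hsum _))

theorem measure_exists_finset_le {Ω ι : Type*} [MeasurableSpace Ω] [Countable ι] {μ : Measure Ω}
    {A : ι → Set Ω} {a : ι → ℝ≥0∞} (hA : ∀ S : Finset ι, μ (⋂ i ∈ S, A i) ≤ ∏ i ∈ S, a i)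
    {l : ι → ℕ} {y : ℝ≥0∞} (hy : 1 ≤ y) {c : ℝ} (hc : 0 ≤ c)
    (hsum : ∑' i, a i * y ^ l i ≤ ENNReal.ofReal c) (n : ℕ) :
    μ {ω | ∃ S : Finset ι, n ≤ ∑ i ∈ S, l i ∧ ∀ i ∈ S, ω ∈ A i} ≤
      ENNReal.ofReal (exp c) / y ^ n := by
  have hcover : {ω | ∃ S : Finset ι, n ≤ ∑ i ∈ S, l i ∧ ∀ i ∈ S, ω ∈ A i} =
      ⋃ S : {S : Finset ι // n ≤ ∑ i ∈ S, l i}, ⋂ i ∈ S.1, A i := by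
    ext ω
    simp
  have hterm (S : {S : Finset ι // n ≤ ∑ i ∈ S, l i}) :
      μ (⋂ i ∈ S.1, A i) * y ^ n ≤ ∏ i ∈ S.1, a i * y ^ l i := by
    rw [Finset.prod_mul_distrib, Finset.prod_pow_eq_pow_sum]
    exact mul_le_mul' (hA S) (pow_le_pow_right₀ hy S.2)
  rw [ENNReal.le_div_iff_mul_le (.inr (by simp [exp_pos])) (.inr ofReal_ne_top), hcover]
  calc μ (⋃ S : {S : Finset ι // n ≤ ∑ i ∈ S, l i}, ⋂ i ∈ S.1, A i) * y ^ n
      ≤ (∑' S : {S : Finset ι // n ≤ ∑ i ∈ S, l i}, μ (⋂ i ∈ S.1, A i)) * y ^ n := by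
        gcongr
        exact measure_iUnion_le _
    _ ≤ ∑' S : {S : Finset ι // n ≤ ∑ i ∈ S, l i}, ∏ i ∈ S.1, a i * y ^ l i := by
        rw [← ENNReal.tsum_mul_right]
        exact ENNReal.tsum_le_tsum hterm
    _ ≤ ∑' S : Finset ι, ∏ i ∈ S, a i * y ^ l i :=
        ENNReal.tsum_comp_le_tsum_of_injective Subtype.val_injective
          (fun S : Finset ι => ∏ i ∈ S, a i * y ^ l i)
    _ ≤ ENNReal.ofReal (exp c) := tsum_finset_prod_le_exp hc hsum

theorem tsum_add_two_mul_pow_succ_le {x : ℝ≥0∞} (hx : 4 * x ≤ 1) :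
    ∑' m : ℕ, (m + 2) * x ^ (m + 1) ≤ 4 * x := by
  have hhalf : 2 * x ≤ 2⁻¹ := by
    rw [ENNReal.le_inv_iff_mul_le]
    calc 2 * x * 2 = 4 * x := by ring
      _ ≤ 1 := hx
  have hterm (m : ℕ) : (m + 2) * x ^ (m + 1) ≤ 2 * x * 2⁻¹ ^ m := by
    have hpow : (m + 2 : ℝ≥0∞) ≤ 2 ^ (m + 1) := mod_cast Nat.lt_two_pow_self (n := m + 1)
    calc (m + 2) * x ^ (m + 1) ≤ 2 ^ (m + 1) * x ^ (m + 1) := by gcongr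
      _ = 2 * x * (2 * x) ^ m := by ring
      _ ≤ 2 * x * 2⁻¹ ^ m := by gcongr
  calc ∑' m : ℕ, (m + 2) * x ^ (m + 1) ≤ ∑' m : ℕ, 2 * x * 2⁻¹ ^ m := ENNReal.tsum_le_tsum hterm
    _ = 2 * x * 2 := by
        rw [ENNReal.tsum_mul_left, ENNReal.tsum_geometric, ENNReal.one_sub_inv_two, inv_inv]
    _ = 4 * x := by ring

theorem poissonMeasure_Ici_one_le (r : ℝ≥0) : poissonMeasure r (Set.Ici 1) ≤ r := by
  have hcompl : (Set.Ici 1 : Set ℕ) = {0}ᶜ := by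
    ext k
    simp [Nat.one_le_iff_ne_zero]
  rw [hcompl, prob_compl_eq_one_sub (measurableSet_singleton 0), poissonMeasure_singleton,
    ← ENNReal.ofReal_one, ← ENNReal.ofReal_sub _ (by positivity), ← ENNReal.ofReal_coe_nnreal]
  refine ENNReal.ofReal_le_ofReal ?_
  have hexp := one_sub_le_exp_neg r
  simp only [pow_zero, mul_one, Nat.factorial_zero, Nat.cast_one, div_one]
  linarith

theorem eq_infinitePi_of_cylinder_singleton {ι α : Type*} [Nonempty α] [Countable α]
    [MeasurableSpace α] [MeasurableSingletonClass α] {μ : Measure (ι → α)} {ν : ι → Measure α}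
    [∀ i, IsProbabilityMeasure (ν i)]
    (h : ∀ (F : Finset ι) (g : ι → α), μ {ω | ∀ i ∈ F, ω i = g i} = ∏ i ∈ F, ν i {g i}) :
    μ = Measure.infinitePi ν := by
  classical
  refine ((Measure.isProjectiveLimit_infinitePi ν).unique fun F =>
    Measure.ext_of_singleton fun x => ?_).symm
  obtain ⟨g, rfl⟩ : ∃ g : ι → α, F.restrict g = x :=
    Subtype.surjective_restrict (β := fun _ => α) (· ∈ F) x
  have hcyl : (F.restrict ⁻¹' {F.restrict g} : Set (ι → α)) = {ω : ι → α | ∀ i ∈ F, ω i = g i} := by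
    ext ω
    simp [funext_iff, Finset.restrict]
  rw [Measure.map_apply (by fun_prop) (measurableSet_singleton _), hcyl, h, Measure.pi_singleton,
    ← Finset.prod_attach]
  rfl

section Intensity

variable {d : ℕ} {u T : ℝ} {μ : Measure (W d → ℕ)}

theorem intensity_nonneg (hu : 0 ≤ u) (hT : 0 ≤ T) (w : W d) : 0 ≤ intensity d u T w := by
  unfold intensity
  positivity

theorem intensity_le (hu : 0 ≤ u) (hT : 0 ≤ T) (w : W d) :
    intensity d u T w ≤ 2 * d * u * (T / (2 * d)) ^ w.1.1 := by
  have hT1 : 1 ≤ T + 1 := by linarith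
  have hstep : T / ((T + 1) * (2 * d)) ≤ T / (2 * d) := by
    rw [mul_comm, ← div_div]
    exact div_le_self (by positivity) hT1
  calc intensity d u T w
      ≤ u * (2 * d) * (T / (2 * d)) ^ w.1.1 := by
        unfold intensity
        gcongr
        exact div_le_self (by positivity) (one_le_pow₀ hT1)
    _ = 2 * d * u * (T / (2 * d)) ^ w.1.1 := by ring

theorem IsFRI.eq_infinitePi (hu : 0 ≤ u) (hT : 0 ≤ T) (hμ : IsFRI d u T μ) :
    μ = Measure.infinitePi fun w => poissonMeasure (intensity d u T w).toNNReal :=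
  eq_infinitePi_of_cylinder_singleton fun F g => by
    simp only [hμ.2 F g, poissonMeasure_singleton, Real.coe_toNNReal _ (intensity_nonneg hu hT _)]

theorem IsFRI.measure_iInter_one_le_le (hu : 0 ≤ u) (hT : 0 ≤ T) (hμ : IsFRI d u T μ)
    (S : Finset (W d)) :
    μ (⋂ w ∈ S, {ω | 1 ≤ ω w}) ≤ ∏ w ∈ S, ENNReal.ofReal (intensity d u T w) := by
  have hbox : ⋂ w ∈ S, {ω : W d → ℕ | 1 ≤ ω w} = Set.pi S fun _ => Set.Ici 1 := by
    ext ω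
    simp
  rw [hbox, hμ.eq_infinitePi hu hT,
    Measure.infinitePi_pi _ fun _ _ => measurableSet_Ici]
  exact Finset.prod_le_prod' fun w _ => poissonMeasure_Ici_one_le _

/-- The walks of length `n` through the vertex `a`. -/
def walksThrough (n : ℕ) (a : Fin d → ℤ) : Set (W d) :=
  {w | w.1.1 = n ∧ a ∈ Set.range w.1.2}

theorem encard_walksThrough_le (n : ℕ) (a : Fin d → ℤ) :
    (walksThrough n a).encard ≤ (n + 1) * (2 * d) ^ n := by
  let steps : Set (Fin d → ℤ) := {v | ∑ j, |v j| = 1}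
  let pathsAt (k : Fin (n + 1)) : Set (Fin (n + 1) → Fin d → ℤ) :=
    {w | (∀ i : Fin n, w i.succ - w i.castSucc ∈ steps) ∧ w k = a}
  have hsub : Subtype.val '' walksThrough n a ⊆ Sigma.mk n '' ⋃ k, pathsAt k := by
    rintro _ ⟨⟨⟨m, w⟩, hw⟩, ⟨rfl, k, hk⟩, rfl⟩
    exact ⟨w, Set.mem_iUnion.2 ⟨k, hw, hk⟩, rfl⟩
  have hpaths (k : Fin (n + 1)) : (pathsAt k).encard ≤ (2 * d) ^ n :=
    (encard_paths_le steps k a).trans <|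
      pow_le_pow_left' (by simpa using encard_sum_abs_eq_one_le (Fin d)) n
  calc (walksThrough n a).encard
      = (Subtype.val '' walksThrough n a).encard := (Subtype.val_injective.encard_image _).symm
    _ ≤ (⋃ k, pathsAt k).encard := (Set.encard_le_encard hsub).trans (Set.encard_image_le _ _)
    _ ≤ ∑ k, (pathsAt k).encard := Set.encard_iUnion_le_of_fintype _
    _ ≤ ∑ _k : Fin (n + 1), (2 * d : ℕ∞) ^ n := Finset.sum_le_sum fun k _ => hpaths k
    _ = (n + 1) * (2 * d) ^ n := by simp

theorem tsum_walksThrough_le (hu : 0 ≤ u) (hT : 0 ≤ T) (y : ℝ≥0∞) (n : ℕ) (a : Fin d → ℤ) :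
    ∑' w : walksThrough n a, ENNReal.ofReal (intensity d u T w) * y ^ w.1.1.1 ≤
      ENNReal.ofReal (2 * d * u) * ((n + 1) * (ENNReal.ofReal T * y) ^ n) := by
  have hterm (w : walksThrough n a) : ENNReal.ofReal (intensity d u T w) * y ^ w.1.1.1 ≤
      ENNReal.ofReal (2 * d * u) * ENNReal.ofReal (T / (2 * d)) ^ n * y ^ n := by
    have hle := ENNReal.ofReal_le_ofReal (intensity_le hu hT w.1)
    rw [ENNReal.ofReal_mul (by positivity), ENNReal.ofReal_pow (by positivity)] at hle
    rw [w.2.1] at hle ⊢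
    gcongr
  have hcard : ((walksThrough n a).encard : ℝ≥0∞) ≤ (n + 1) * (2 * d) ^ n := by
    exact_mod_cast ENat.toENNReal_le.2 (encard_walksThrough_le n a)
  have hstep : (2 * d : ℝ≥0∞) * ENNReal.ofReal (T / (2 * d)) ≤ ENNReal.ofReal T := by
    rw [← ENNReal.ofReal_natCast, ← ENNReal.ofReal_ofNat, ← ENNReal.ofReal_mul zero_le_two,
      ← ENNReal.ofReal_mul (by positivity), mul_div_left_comm]
    exact ENNReal.ofReal_le_ofReal (mul_le_of_le_one_right hT (div_self_le_one _))
  calc ∑' w : walksThrough n a, ENNReal.ofReal (intensity d u T w) * y ^ w.1.1.1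
      ≤ (walksThrough n a).encard *
          (ENNReal.ofReal (2 * d * u) * ENNReal.ofReal (T / (2 * d)) ^ n * y ^ n) := by
        rw [← ENNReal.tsum_set_const]
        exact ENNReal.tsum_le_tsum hterm
    _ ≤ (n + 1) * (2 * d) ^ n *
          (ENNReal.ofReal (2 * d * u) * ENNReal.ofReal (T / (2 * d)) ^ n * y ^ n) := by gcongr
    _ = ENNReal.ofReal (2 * d * u) *
          ((n + 1) * (2 * d * ENNReal.ofReal (T / (2 * d)) * y) ^ n) := by ring
    _ ≤ ENNReal.ofReal (2 * d * u) * ((n + 1) * (ENNReal.ofReal T * y) ^ n) := by gcongr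

theorem tsum_one_le_length_through_le (hu : 0 ≤ u) (hT : 0 ≤ T) {y : ℝ≥0∞}
    (hy : 4 * (ENNReal.ofReal T * y) ≤ 1) (a : Fin d → ℤ) :
    ∑' w : {w : W d | 1 ≤ w.1.1 ∧ a ∈ Set.range w.1.2},
        ENNReal.ofReal (intensity d u T w) * y ^ w.1.1.1 ≤
      ENNReal.ofReal (2 * d * u) * (4 * (ENNReal.ofReal T * y)) := by
  let weight (w : W d) : ℝ≥0∞ := ENNReal.ofReal (intensity d u T w) * y ^ w.1.1
  have hcover : {w : W d | 1 ≤ w.1.1 ∧ a ∈ Set.range w.1.2} ⊆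
      ⋃ m : ℕ, walksThrough (m + 1) a := fun w ⟨hlen, ha⟩ =>
    Set.mem_iUnion.2 ⟨w.1.1 - 1, (Nat.sub_add_cancel hlen).symm, ha⟩
  calc ∑' w : {w : W d | 1 ≤ w.1.1 ∧ a ∈ Set.range w.1.2}, weight w
      ≤ ∑' w : ⋃ m : ℕ, walksThrough (m + 1) a, weight w := ENNReal.tsum_mono_subtype _ hcover
    _ ≤ ∑' m : ℕ, ∑' w : walksThrough (m + 1) a, weight w := ENNReal.tsum_iUnion_le_tsum _ _
    _ ≤ ∑' m : ℕ, ENNReal.ofReal (2 * d * u) * ((m + 2) * (ENNReal.ofReal T * y) ^ (m + 1)) := by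
        refine ENNReal.tsum_le_tsum fun m => (tsum_walksThrough_le hu hT y (m + 1) a).trans_eq ?_
        push_cast
        ring
    _ ≤ ENNReal.ofReal (2 * d * u) * (4 * (ENNReal.ofReal T * y)) := by
        rw [ENNReal.tsum_mul_left]
        gcongr
        exact tsum_add_two_mul_pow_succ_le hy

end Intensity

/-- The `i`-th edge of a path, as an unordered pair. -/
def edgeAt {V : Type*} {n : ℕ} (p : Fin (n + 1) → V) (i : Fin n) : Sym2 V :=
  s(p i.castSucc, p i.succ)

theorem edgeAt_injective {V : Type*} {n : ℕ} {p : Fin (n + 1) → V} (hp : Function.Injective p) :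
    Function.Injective (edgeAt p) := by
  intro i j hij
  simp only [edgeAt, Sym2.eq_iff, hp.eq_iff, Fin.ext_iff, Fin.val_castSucc, Fin.val_succ] at hij
  omega

theorem crosses_iff {d : ℕ} {w : W d} {a b : Fin d → ℤ} :
    Crosses w a b ↔ s(a, b) ∈ Set.range (edgeAt w.1.2) := by
  simp [Crosses, edgeAt]

theorem isSAP_iff {d n : ℕ} {p : Fin (n + 1) → Fin d → ℤ} :
    IsSAP d n p ↔ p 0 = 0 ∧ (∀ i : Fin n, ∑ j, |p i.succ j - p i.castSucc j| = 1) ∧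
      Function.Injective (edgeAt p) := by
  simp only [IsSAP, edgeAt, Function.Injective, Sym2.eq_iff, ne_eq, not_imp_not]

theorem card_le_length_of_crosses {d n : ℕ} {p : Fin (n + 1) → Fin d → ℤ}
    (hp : Function.Injective (edgeAt p)) {w : W d} {A : Finset (Fin n)}
    (hA : ∀ i ∈ A, Crosses w (p i.castSucc) (p i.succ)) : A.card ≤ w.1.1 := by
  classical
  calc A.card = (A.image (edgeAt p)).card := (Finset.card_image_of_injective A hp).symm
    _ ≤ (Finset.univ.image (edgeAt w.1.2)).card := by
        refine Finset.card_le_card (Finset.image_subset_iff.2 fun i hi => ?_)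
        simpa only [Finset.mem_image, Finset.mem_univ, true_and] using! crosses_iff.1 (hA i hi)
    _ ≤ w.1.1 := Finset.card_image_le.trans_eq (by simp)

/-- The walk `w` crosses an edge of the path `p`. -/
def Hits {d n : ℕ} (p : Fin (n + 1) → Fin d → ℤ) (w : W d) : Prop :=
  ∃ i : Fin n, Crosses w (p i.castSucc) (p i.succ)

/-- The event that every edge of the path `p` is open. -/
def openEvent {d n : ℕ} (p : Fin (n + 1) → Fin d → ℤ) : Set (W d → ℕ) :=
  {ω | ∀ i : Fin n, OpenEdge ω (p i.castSucc) (p i.succ)}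

theorem exists_hits_finset_of_mem_openEvent {d n : ℕ} {p : Fin (n + 1) → Fin d → ℤ}
    (hp : Function.Injective (edgeAt p)) {ω : W d → ℕ} (hω : ω ∈ openEvent p) :
    ∃ S : Finset {w : W d | Hits p w}, n ≤ ∑ w ∈ S, w.1.1.1 ∧ ∀ w ∈ S, 1 ≤ ω w := by
  classical
  choose w hpresent hcross using hω
  let hit (i : Fin n) : {w : W d | Hits p w} := ⟨w i, i, hcross i⟩
  refine ⟨Finset.univ.image hit, ?_, by simpa [hit] using hpresent⟩
  calc n = ∑ v ∈ Finset.univ.image hit, (Finset.univ.filter fun i => hit i = v).card := by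
        simpa using Finset.card_eq_sum_card_image hit Finset.univ
    _ ≤ ∑ v ∈ Finset.univ.image hit, v.1.1.1 := by
        refine Finset.sum_le_sum fun v _ => card_le_length_of_crosses hp fun i hi => ?_
        obtain rfl : hit i = v := by simpa using hi
        exact hcross i

section OpenPath

variable {d : ℕ} {u T : ℝ} {μ : Measure (W d → ℕ)}

theorem tsum_hits_le (hu : 0 ≤ u) (hT : 0 ≤ T) {y : ℝ≥0∞}
    (hy : 4 * (ENNReal.ofReal T * y) ≤ 1) {n : ℕ} (p : Fin (n + 1) → Fin d → ℤ) :
    ∑' w : {w : W d | Hits p w}, ENNReal.ofReal (intensity d u T w) * y ^ w.1.1.1 ≤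
      n * (ENNReal.ofReal (2 * d * u) * (4 * (ENNReal.ofReal T * y))) := by
  let weight (w : W d) : ℝ≥0∞ := ENNReal.ofReal (intensity d u T w) * y ^ w.1.1
  let visiting (i : Fin n) : Set (W d) := {w | 1 ≤ w.1.1 ∧ p i.castSucc ∈ Set.range w.1.2}
  have hcover : {w : W d | Hits p w} ⊆ ⋃ i, visiting i := by
    rintro w ⟨i, k, hk⟩
    refine Set.mem_iUnion.2 ⟨i, k.pos, ?_⟩
    obtain ⟨h, -⟩ | ⟨-, h⟩ := hk
    exacts [⟨_, h⟩, ⟨_, h⟩]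
  calc ∑' w : {w : W d | Hits p w}, weight w
      ≤ ∑' w : ⋃ i, visiting i, weight w := ENNReal.tsum_mono_subtype _ hcover
    _ ≤ ∑ i, ∑' w : visiting i, weight w := ENNReal.tsum_iUnion_le _ _
    _ ≤ ∑ _i : Fin n, ENNReal.ofReal (2 * d * u) * (4 * (ENNReal.ofReal T * y)) :=
        Finset.sum_le_sum fun i _ => tsum_one_le_length_through_le hu hT hy _
    _ = n * (ENNReal.ofReal (2 * d * u) * (4 * (ENNReal.ofReal T * y))) := by simp

theorem IsFRI.measure_openEvent_le (hu : 0 ≤ u) (hT : 0 ≤ T) (hμ : IsFRI d u T μ) {y : ℝ}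
    (hy : 1 ≤ y) (hTy : 4 * (T * y) ≤ 1) {n : ℕ} {p : Fin (n + 1) → Fin d → ℤ}
    (hp : Function.Injective (edgeAt p)) :
    μ (openEvent p) ≤ ENNReal.ofReal (exp (n * (8 * d * u * (T * y))) / y ^ n) := by
  have hy0 : 0 < y := by linarith
  have hA (S : Finset {w : W d | Hits p w}) : μ (⋂ w ∈ S, {ω | 1 ≤ ω w.1}) ≤
      ∏ w ∈ S, ENNReal.ofReal (intensity d u T w) := by
    have hmap : ⋂ w ∈ S, {ω : W d → ℕ | 1 ≤ ω w.1} =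
        ⋂ w ∈ S.map (.subtype _), {ω : W d → ℕ | 1 ≤ ω w} := by
      ext ω
      simp
    rw [hmap]
    exact (hμ.measure_iInter_one_le_le hu hT _).trans_eq (Finset.prod_map _ _ _)
  have hTy' : 4 * (ENNReal.ofReal T * ENNReal.ofReal y) ≤ 1 := by
    rw [← ENNReal.ofReal_mul hT, ← ENNReal.ofReal_ofNat, ← ENNReal.ofReal_mul zero_le_four]
    exact ENNReal.ofReal_le_one.2 hTy
  have hweight : ∑' w : {w : W d | Hits p w},
      ENNReal.ofReal (intensity d u T w) * ENNReal.ofReal y ^ w.1.1.1 ≤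
        ENNReal.ofReal (n * (8 * d * u * (T * y))) := by
    refine (tsum_hits_le hu hT hTy' p).trans_eq ?_
    rw [← ENNReal.ofReal_mul hT, ← ENNReal.ofReal_ofNat, ← ENNReal.ofReal_mul zero_le_four,
      ← ENNReal.ofReal_mul (by positivity), ← ENNReal.ofReal_natCast,
      ← ENNReal.ofReal_mul (by positivity)]
    ring_nf
  rw [ENNReal.ofReal_div_of_pos (by positivity), ENNReal.ofReal_pow hy0.le]
  calc μ (openEvent p)
      ≤ μ {ω | ∃ S : Finset {w : W d | Hits p w},
          n ≤ ∑ w ∈ S, w.1.1.1 ∧ ∀ w ∈ S, ω ∈ {ω | 1 ≤ ω w.1}} :=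
        measure_mono fun ω hω => exists_hits_finset_of_mem_openEvent hp hω
    _ ≤ ENNReal.ofReal (exp (n * (8 * d * u * (T * y)))) / ENNReal.ofReal y ^ n :=
        measure_exists_finset_le hA (ENNReal.one_le_ofReal.2 hy) (by positivity) hweight n

end OpenPath

section SelfAvoidingPaths

variable {d : ℕ}

theorem encard_isSAP_le (d n : ℕ) : {p | IsSAP d n p}.encard ≤ (2 * d) ^ n :=
  calc {p | IsSAP d n p}.encard
      ≤ {p : Fin (n + 1) → Fin d → ℤ |
          (∀ i : Fin n, p i.succ - p i.castSucc ∈ {v : Fin d → ℤ | ∑ j, |v j| = 1}) ∧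
            p 0 = 0}.encard :=
        Set.encard_le_encard fun _ hp => ⟨hp.2.1, hp.1⟩
    _ ≤ {v : Fin d → ℤ | ∑ j, |v j| = 1}.encard ^ n := encard_paths_le _ 0 0
    _ ≤ (2 * d) ^ n := pow_le_pow_left' (by simpa using encard_sum_abs_eq_one_le (Fin d)) n

theorem finite_isSAP (d n : ℕ) : {p | IsSAP d n p}.Finite :=
  Set.encard_lt_top_iff.1 <| (encard_isSAP_le d n).trans_lt <| by
    exact_mod_cast ENat.natCast_lt_top ((2 * d) ^ n)

/-- The finite set of paths of length `n` from the origin that use no edge twice. -/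
def saPaths (d n : ℕ) : Finset (Fin (n + 1) → Fin d → ℤ) :=
  (finite_isSAP d n).toFinset

theorem mem_saPaths {n : ℕ} {p : Fin (n + 1) → Fin d → ℤ} : p ∈ saPaths d n ↔ IsSAP d n p := by
  simp [saPaths]

theorem card_saPaths_le (d n : ℕ) : (saPaths d n).card ≤ (2 * d) ^ n := by
  have h := encard_isSAP_le d n
  rw [(finite_isSAP d n).encard_eq_coe_toFinset_card] at h
  exact_mod_cast h

theorem measurableSet_openEvent {n : ℕ} (p : Fin (n + 1) → Fin d → ℤ) :
    MeasurableSet (openEvent p) := by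
  have hpresent (w : W d) : MeasurableSet {ω : W d → ℕ | 1 ≤ ω w} :=
    measurableSet_le measurable_const (measurable_pi_apply w)
  have hopen : openEvent p = ⋂ i : Fin n, ⋃ w : W d,
      {ω | 1 ≤ ω w} ∩ {_ω | Crosses w (p i.castSucc) (p i.succ)} := by
    ext ω
    simp [openEvent, OpenEdge]
  rw [hopen]
  exact .iInter fun i => .iUnion fun w => (hpresent w).inter (.const _)

open scoped Classical in
theorem openSAPcount_eq_card (n : ℕ) (ω : W d → ℕ) :
    openSAPcount d n ω = ((saPaths d n).filter (ω ∈ openEvent ·)).card := by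
  rw [openSAPcount, ← Set.ncard_coe_finset]
  congr 1
  ext p
  rw [Finset.mem_coe, Finset.mem_filter, mem_saPaths]
  rfl

theorem lintegral_openSAPcount (μ : Measure (W d → ℕ)) (n : ℕ) :
    ∫⁻ ω, (openSAPcount d n ω : ℝ≥0∞) ∂μ = ∑ p ∈ saPaths d n, μ (openEvent p) := by
  classical
  have hcount (ω : W d → ℕ) : (openSAPcount d n ω : ℝ≥0∞) =
      ∑ p ∈ saPaths d n, (openEvent p).indicator 1 ω := by
    rw [openSAPcount_eq_card, Finset.card_filter]
    push_cast
    exact Finset.sum_congr rfl fun p _ => by simp [Set.indicator_apply]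
  simp_rw [hcount]
  rw [lintegral_finsetSum _ fun p _ => measurable_one.indicator (measurableSet_openEvent p)]
  exact Finset.sum_congr rfl fun p _ => lintegral_indicator_one (measurableSet_openEvent p)

end SelfAvoidingPaths

section Cluster

variable {d : ℕ} {ω : W d → ℕ}

theorem OpenEdge.symm {a b : Fin d → ℤ} (h : OpenEdge ω a b) : OpenEdge ω b a := by
  obtain ⟨w, hw, i, hi⟩ := h
  exact ⟨w, hw, i, hi.symm⟩

theorem OpenEdge.sum_abs_sub_eq_one {a b : Fin d → ℤ} (h : OpenEdge ω a b) :
    ∑ j, |b j - a j| = 1 := by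
  obtain ⟨w, -, i, ⟨rfl, rfl⟩ | ⟨rfl, rfl⟩⟩ := h
  · exact w.2 i
  · simpa only [abs_sub_comm] using w.2 i

/-- The random graph on `ℤ^d` formed by the open edges. -/
def openGraph (ω : W d → ℕ) : SimpleGraph (Fin d → ℤ) where
  Adj := OpenEdge ω
  symm := ⟨fun _ _ => OpenEdge.symm⟩
  loopless := ⟨fun _ h => by simpa using h.sum_abs_sub_eq_one⟩

theorem sum_abs_sub_le_length {a b : Fin d → ℤ} (q : (openGraph ω).Walk a b) :
    ∑ j, |b j - a j| ≤ q.length := by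
  induction q with
  | nil => simp
  | @cons a c b h q ih =>
    calc ∑ j, |b j - a j| ≤ ∑ j, (|b j - c j| + |c j - a j|) :=
          Finset.sum_le_sum fun j _ => abs_sub_le _ _ _
      _ = ∑ j, |b j - c j| + 1 := by rw [Finset.sum_add_distrib, OpenEdge.sum_abs_sub_eq_one h]
      _ ≤ (SimpleGraph.Walk.cons h q).length := by simpa using ih

theorem exists_isPath_of_infinite_cluster (hω : (Cluster ω).Infinite) (n : ℕ) :
    ∃ v, ∃ q : (openGraph ω).Walk 0 v, q.IsPath ∧ n ≤ q.length := by
  classical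
  obtain ⟨v, hv, hfar⟩ := hω.exists_notMem_finite (finite_sum_abs_lt (n : ℤ))
  obtain ⟨q, hq⟩ := ((SimpleGraph.reachable_iff_reflTransGen 0 v).2 hv :
    (openGraph ω).Reachable 0 v).exists_isPath
  have hlength := sum_abs_sub_le_length q
  simp only [Set.mem_ofPred_eq, not_lt, Pi.zero_apply, sub_zero] at hfar hlength
  exact ⟨v, q, hq, mod_cast hfar.trans hlength⟩

theorem exists_isSAP_of_isPath {v : Fin d → ℤ} {q : (openGraph ω).Walk 0 v} (hq : q.IsPath)
    {n : ℕ} (hn : n ≤ q.length) : ∃ p, IsSAP d n p ∧ ω ∈ openEvent p := by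
  let p (i : Fin (n + 1)) : Fin d → ℤ := q.getVert i
  have hopen (i : Fin n) : OpenEdge ω (p i.castSucc) (p i.succ) := by
    simpa [p] using! q.adj_getVert_succ (i.2.trans_le hn)
  have hinj : Function.Injective p := fun i j hij =>
    Fin.ext (hq.getVert_injOn (i.is_le.trans hn) (j.is_le.trans hn) hij)
  exact ⟨p, isSAP_iff.2 ⟨by simp [p], fun i => (hopen i).sum_abs_sub_eq_one, edgeAt_injective hinj⟩,
    hopen⟩

theorem infinite_cluster_subset (d n : ℕ) :
    {ω : W d → ℕ | (Cluster ω).Infinite} ⊆ ⋃ p ∈ saPaths d n, openEvent p := by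
  intro ω hω
  obtain ⟨v, q, hq, hn⟩ := exists_isPath_of_infinite_cluster hω n
  obtain ⟨p, hp, hopen⟩ := exists_isSAP_of_isPath hq hn
  exact Set.mem_biUnion (mem_saPaths.2 hp) hopen

end Cluster

theorem peierls_bound_eq {d : ℕ} (hd : 0 < d) (n : ℕ) :
    (2 * d : ℝ) ^ n * (2 * (3 * d : ℝ) ^ (-(n : ℤ)) + (3 * d : ℝ) ^ (-(n : ℤ) - 1)) =
      (2 + (3 * d : ℝ)⁻¹) * (2 / 3 : ℝ) ^ n := by
  have hratio : (2 / 3 : ℝ) = 2 * d * (3 * d : ℝ)⁻¹ := by field_simp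
  rw [zpow_sub_one₀ (by positivity), zpow_neg, zpow_natCast, hratio, mul_pow (2 * d : ℝ), inv_pow]
  ring

theorem tendsto_peierls_bound {d : ℕ} (hd : 0 < d) :
    Tendsto (fun n : ℕ =>
      (2 * d : ℝ) ^ n * (2 * (3 * d : ℝ) ^ (-(n : ℤ)) + (3 * d : ℝ) ^ (-(n : ℤ) - 1)))
      atTop (nhds 0) := by
  simp_rw [peierls_bound_eq hd]
  simpa using (tendsto_pow_atTop_nhds_zero_of_lt_one (r := (2 / 3 : ℝ)) (by norm_num)
    (by norm_num)).const_mul (2 + (3 * d : ℝ)⁻¹)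

/-- A value `T₀` below which the exponential moment at `y = 3de` is under control:
`T < T₀` gives both `4Ty ≤ 1` and `8duTy ≤ 1`. -/
def subcriticalThreshold (d : ℕ) (u : ℝ) : ℝ :=
  (12 * d * exp 1 * (1 + 2 * d * u))⁻¹

section Peierls

variable {d : ℕ} {u T : ℝ} {μ : Measure (W d → ℕ)}

theorem subcriticalThreshold_pos (hd : 0 < d) (hu : 0 ≤ u) : 0 < subcriticalThreshold d u := by
  unfold subcriticalThreshold
  positivity

theorem subcriticalThreshold_lt_one (hd : 0 < d) (hu : 0 ≤ u) : subcriticalThreshold d u < 1 := by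
  have hd1 : (1 : ℝ) ≤ d := mod_cast hd
  have he : 1 < exp 1 := one_lt_exp_iff.2 one_pos
  have hprod : 1 < d * exp 1 := by nlinarith
  have hdu : 0 ≤ d * u := by positivity
  exact inv_lt_one_of_one_lt₀ (by nlinarith)

theorem IsFRI.measure_openEvent_le_of_lt (hd : 0 < d) (hu : 0 ≤ u) (hT : 0 ≤ T)
    (hT₀ : T < subcriticalThreshold d u) (hμ : IsFRI d u T μ) {n : ℕ}
    {p : Fin (n + 1) → Fin d → ℤ} (hp : Function.Injective (edgeAt p)) :
    μ (openEvent p) ≤ ENNReal.ofReal ((3 * d : ℝ)⁻¹ ^ n) := by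
  have hd1 : (1 : ℝ) ≤ d := mod_cast hd
  have he : 1 ≤ exp 1 := one_le_exp zero_le_one
  let y : ℝ := 3 * d * exp 1
  have hy : 1 ≤ y := by
    simp only [y]
    nlinarith
  have hsmall : 4 * (T * y) + 8 * d * u * (T * y) ≤ 1 := by
    rw [subcriticalThreshold, ← one_div, lt_div_iff₀ (by positivity)] at hT₀
    calc 4 * (T * y) + 8 * d * u * (T * y) = T * (12 * d * exp 1 * (1 + 2 * d * u)) := by
          simp only [y]
          ring
      _ ≤ 1 := hT₀.le
  have hTy : 0 ≤ T * y := by positivity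
  have hduTy : 0 ≤ 8 * d * u * (T * y) := by positivity
  have hexp : exp (n * (8 * d * u * (T * y))) ≤ exp 1 ^ n := by
    rw [← exp_nat_mul]
    gcongr
    linarith
  refine (hμ.measure_openEvent_le hu hT hy (by linarith) hp).trans (ENNReal.ofReal_le_ofReal ?_)
  calc exp (n * (8 * d * u * (T * y))) / y ^ n ≤ exp 1 ^ n / y ^ n := by gcongr
    _ = (3 * d : ℝ)⁻¹ ^ n := by
      rw [← div_pow]
      congr 1
      simp only [y]
      field_simp

theorem IsFRI.sum_measure_openEvent_le (hd : 0 < d) (hu : 0 ≤ u) (hT : 0 ≤ T)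
    (hT₀ : T < subcriticalThreshold d u) (hμ : IsFRI d u T μ) (n : ℕ) :
    ∑ p ∈ saPaths d n, μ (openEvent p) ≤ ENNReal.ofReal
      ((2 * d : ℝ) ^ n * (2 * (3 * d : ℝ) ^ (-(n : ℤ)) + (3 * d : ℝ) ^ (-(n : ℤ) - 1))) := by
  have hopen : ∀ p ∈ saPaths d n, μ (openEvent p) ≤ ENNReal.ofReal ((3 * d : ℝ)⁻¹ ^ n) :=
    fun p hp => hμ.measure_openEvent_le_of_lt hd hu hT hT₀ (isSAP_iff.1 (mem_saPaths.1 hp)).2.2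
  have hcard : ((saPaths d n).card : ℝ) ≤ (2 * d) ^ n := mod_cast card_saPaths_le d n
  calc ∑ p ∈ saPaths d n, μ (openEvent p)
      ≤ (saPaths d n).card • ENNReal.ofReal ((3 * d : ℝ)⁻¹ ^ n) :=
        Finset.sum_le_card_nsmul _ _ _ hopen
    _ = ENNReal.ofReal ((saPaths d n).card * (3 * d : ℝ)⁻¹ ^ n) := by
        rw [nsmul_eq_mul, ENNReal.ofReal_mul (by positivity), ENNReal.ofReal_natCast]
    _ ≤ _ := by
        refine ENNReal.ofReal_le_ofReal (mul_le_mul hcard ?_ (by positivity) (by positivity))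
        rw [inv_pow, ← zpow_natCast, ← zpow_neg]
        have hmain : 0 < (3 * d : ℝ) ^ (-(n : ℤ)) := by positivity
        have hrest : 0 < (3 * d : ℝ) ^ (-(n : ℤ) - 1) := by positivity
        linarith

end Peierls

theorem fri_subcritical_general (d : ℕ) (hd : 0 < d) (u : ℝ) (hu : 0 ≤ u) :
    ∃ T₀ : ℝ, 0 < T₀ ∧ T₀ < 1 ∧
      Tendsto (fun n : ℕ =>
        ((2 * d : ℝ) ^ n * (2 * (3 * d : ℝ) ^ (-(n : ℤ)) + (3 * d : ℝ) ^ (-(n : ℤ) - 1))))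
        atTop (nhds 0) ∧
      ∀ T : ℝ, 0 < T → T < T₀ → ∀ μ : Measure (W d → ℕ), IsFRI d u T μ →
        (∀ n : ℕ, (∫⁻ ω, (openSAPcount d n ω : ℝ≥0∞) ∂μ) ≤
          ENNReal.ofReal
            ((2 * d : ℝ) ^ n * (2 * (3 * d : ℝ) ^ (-(n : ℤ)) + (3 * d : ℝ) ^ (-(n : ℤ) - 1)))) ∧
        μ {ω | (Cluster ω).Infinite} = 0 := by
  refine ⟨subcriticalThreshold d u, subcriticalThreshold_pos hd hu,
    subcriticalThreshold_lt_one hd hu, tendsto_peierls_bound hd, fun T hT hT₀ μ hμ => ?_⟩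
  have hsum := hμ.sum_measure_openEvent_le hd hu hT.le hT₀
  refine ⟨fun n => (lintegral_openSAPcount μ n).trans_le (hsum n), le_antisymm ?_ zero_le⟩
  have hlimit := ENNReal.tendsto_ofReal (tendsto_peierls_bound hd)
  rw [ENNReal.ofReal_zero] at hlimit
  exact ge_of_tendsto' hlimit fun n =>
    (measure_mono (infinite_cluster_subset d n)).trans <|
      (measure_biUnion_finset_le _ _).trans (hsum n)

/-- Subcritical phase: for `d ≥ 3` and `u > 0` there is `T₀ ∈ (0,1)` such that for every
`0 < T < T₀` and every FRI law `μ = FI^{u,T}`, the expected number of open self-avoiding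
paths of length `n` from the origin is at most `(2d)^n (2(3d)^{-n} + (3d)^{-n-1})`, a bound
tending to `0`; consequently the origin is a.s. not in an infinite cluster. -/
theorem fri_subcritical (d : ℕ) (hd : 3 ≤ d) (u : ℝ) (hu : 0 < u) :
    ∃ T₀ : ℝ, 0 < T₀ ∧ T₀ < 1 ∧
      Tendsto (fun n : ℕ =>
        ((2 * d : ℝ) ^ n * (2 * (3 * d : ℝ) ^ (-(n : ℤ)) + (3 * d : ℝ) ^ (-(n : ℤ) - 1))))
        atTop (nhds 0) ∧
      ∀ T : ℝ, 0 < T → T < T₀ → ∀ μ : Measure (W d → ℕ), IsFRI d u T μ →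
        (∀ n : ℕ, (∫⁻ ω, (openSAPcount d n ω : ℝ≥0∞) ∂μ) ≤
          ENNReal.ofReal
            ((2 * d : ℝ) ^ n * (2 * (3 * d : ℝ) ^ (-(n : ℤ)) + (3 * d : ℝ) ^ (-(n : ℤ) - 1)))) ∧
        μ {ω | (Cluster ω).Infinite} = 0 :=
  fri_subcritical_general d (by omega) u hu.le

end
end

section
/- Let d ≥ 3, u > 0, R ≥ 1. Consider FI^{u,R³} constructed by attaching Poisson(2du/(R³+1)) many killed walks to each vertex. Let A(m,R) = B((128+64m)R²) \ B((128+64(m−1))R²) for m ≥ 1 (with A(1,R) = B(192R²)\B(128R²)). Then the probability that some killed random walk starting in ℤ^d \ B(128R²) ever reaches B̂(R) := [−64R², 64R²]^d is at most Σ_{m=1}^∞ (c₄ m^d R^{2d} c₁ e^{−c₂ m R} + c₄ m^d R^{2d} (2dumR⁴/(R³+1)) e^{−c₃ m R^{1/2}}) for suitable positive constants c₁,...,c₄ depending on u and d, and this bound tends to 0 as R → ∞. -/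
open MeasureTheory Real Filter ENNReal

noncomputable section

/-- The box `B(r) = [-r, r]^d ∩ ℤ^d`. -/
def box (d : ℕ) (r : ℝ) : Set (Fin d → ℤ) := {x | ∀ j, |(x j : ℝ)| ≤ r}

/-- The event that some killed random walk of the configuration starting outside `B(128R²)`
reaches `B̂(R) = [-64R², 64R²]^d`. -/
def BadEvent (d R : ℕ) (ω : W d → ℕ) : Prop :=
  ∃ w : W d, 1 ≤ ω w ∧ w.1.2 0 ∉ box d (128 * R ^ 2) ∧ ∃ i, w.1.2 i ∈ box d (64 * R ^ 2)

/-! Markov's inequality bounds the probability that a walk occurs by its intensity, so it suffices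
to sum the intensities of all walks entering the inner box from outside the outer one. A walk from
`x` that does so travels far along a coordinate at which `|x j|` is maximal. Exponential tilting by
`θ` bounds the number of such walks of length `n` by `(n + 1) (2 d + 2 (cosh θ - 1)) ^ n` times a
factor exponentially small in `θ ‖x‖`, a fixed fraction of which makes the sum over `x` converge.
Killing at mean length `T` makes the sum over `n` converge as long as `2 T θ² ≤ 1`; for `T = R³` we
take `θ = 1 / (2 R √R)`, and distances of order `R²` then cost a factor `exp (-c √R)`. -/

lemma cosh_sub_one_le_sq {t : ℝ} (ht : |t| ≤ 1) : Real.cosh t - 1 ≤ t ^ 2 := by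
  have hpos := (abs_le.1 (Real.abs_exp_sub_one_sub_id_le ht)).2
  have hneg := (abs_le.1 (Real.abs_exp_sub_one_sub_id_le (abs_neg t ▸ ht))).2
  rw [neg_sq] at hneg
  rw [Real.cosh_eq]
  linarith

lemma tsum_prod_apply_eq_prod_tsum {α : Type*} {n : ℕ} (f : Fin n → α → ℝ≥0∞) :
    ∑' x : Fin n → α, ∏ i, f i (x i) = ∏ i, ∑' a, f i a := by
  induction n with
  | zero => simp
  | succ n ih =>
    rw [← (Fin.consEquiv fun _ : Fin (n + 1) => α).tsum_eq, ENNReal.tsum_prod']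
    simp only [Fin.consEquiv, Equiv.coe_fn_mk, Fin.prod_univ_succ, Fin.cons_zero, Fin.cons_succ,
      ENNReal.tsum_mul_left, ENNReal.tsum_mul_right, ih]

lemma tsum_exp_neg_mul_abs_int_le {a : ℝ} (ha : 0 < a) :
    ∑' z : ℤ, ENNReal.ofReal (Real.exp (-a * |(z : ℝ)|)) ≤ ENNReal.ofReal (1 + 2 / a) := by
  set r := Real.exp (-a) with hr
  have hr1 : r < 1 := Real.exp_lt_one_iff.2 (by linarith)
  have hgeom : HasSum (fun n : ℕ => r ^ n) (1 - r)⁻¹ :=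
    hasSum_geometric_of_lt_one (Real.exp_pos _).le hr1
  have hsum : HasSum (fun z : ℤ => Real.exp (-a * |(z : ℝ)|)) ((1 - r)⁻¹ + r * (1 - r)⁻¹) := by
    refine HasSum.of_nat_of_neg_add_one (hgeom.congr_fun fun n => ?_)
      ((hgeom.mul_left r).congr_fun fun n => ?_)
    · rw [hr, ← Real.exp_nat_mul, Int.cast_natCast, Nat.abs_cast, mul_comm]
    · have habs : |((-(n + 1) : ℤ) : ℝ)| = n + 1 := by
        push_cast
        rw [abs_neg, abs_of_nonneg (by positivity)]
      rw [habs, hr, ← Real.exp_nat_mul, ← Real.exp_add]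
      congr 1
      ring
  have hra : r * (a + 1) ≤ 1 := by
    calc r * (a + 1) ≤ r * Real.exp a := by gcongr; exact Real.add_one_le_exp a
      _ = 1 := by rw [hr, ← Real.exp_add, neg_add_cancel, Real.exp_zero]
  rw [← ENNReal.ofReal_tsum_of_nonneg (fun _ => (Real.exp_pos _).le) hsum.summable, hsum.tsum_eq]
  refine ENNReal.ofReal_le_ofReal ?_
  have h1r : 0 < 1 - r := sub_pos.2 hr1
  field_simp
  linarith

/-- The unit step of `ℤ^d` in direction `e.1` with sign `e.2`. -/
def stepVec {d : ℕ} (e : Fin d × ℤˣ) : Fin d → ℤ := Pi.single e.1 (e.2 : ℤ)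

lemma sum_abs_stepVec {d : ℕ} (e : Fin d × ℤˣ) : ∑ j, |stepVec e j| = 1 := by
  simp [stepVec, Pi.single_apply, apply_ite abs, Int.isUnit_iff_abs_eq.1 e.2.isUnit]

lemma exists_stepVec_eq {d : ℕ} {v : Fin d → ℤ} (hv : ∑ j, |v j| = 1) : ∃ e, stepVec e = v := by
  obtain ⟨j, hj⟩ : ∃ j, v j ≠ 0 := by
    by_contra! hzero
    simp [hzero] at hv
  have hsplit : |v j| + ∑ k ∈ Finset.univ.erase j, |v k| = 1 :=
    (Finset.add_sum_erase _ (|v ·|) (Finset.mem_univ j)).trans hv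
  have hrest_nonneg : 0 ≤ ∑ k ∈ Finset.univ.erase j, |v k| :=
    Finset.sum_nonneg fun _ _ => abs_nonneg _
  have hj_pos : 1 ≤ |v j| := Int.one_le_abs hj
  have hrest := (Finset.sum_eq_zero_iff_of_nonneg fun k _ => abs_nonneg (v k)).1
    (by lia : ∑ k ∈ Finset.univ.erase j, |v k| = 0)
  obtain ⟨ε, hε⟩ := Int.isUnit_iff_abs_eq.2 (by lia : |v j| = 1)
  refine ⟨(j, ε), funext fun k => ?_⟩
  rcases eq_or_ne k j with rfl | hk
  · simp [stepVec, hε]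
  · simp [stepVec, hk, abs_eq_zero.1 (hrest k (by simp [hk]))]

/-- The vertices of the walk in `ℤ^d` with starting point `x` and successive steps `e`. -/
def pathOfSteps {d n : ℕ} (x : Fin d → ℤ) (e : Fin n → Fin d × ℤˣ) : Fin (n + 1) → Fin d → ℤ :=
  fun i => x + Fin.partialSum (fun k => stepVec (e k)) i

lemma pathOfSteps_zero {d n : ℕ} (x : Fin d → ℤ) (e : Fin n → Fin d × ℤˣ) :
    pathOfSteps x e 0 = x := by
  rw [pathOfSteps, Fin.partialSum_zero, add_zero]

/-- `pathOfSteps x e` as an element of the space of nearest-neighbour walks. -/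
def walkOfSteps {d n : ℕ} (x : Fin d → ℤ) (e : Fin n → Fin d × ℤˣ) : W d :=
  ⟨⟨n, pathOfSteps x e⟩, fun k => by
    simpa [pathOfSteps, Fin.partialSum_succ] using sum_abs_stepVec (e k)⟩

lemma exists_walkOfSteps_eq {d : ℕ} (w : W d) :
    ∃ e : Fin w.1.1 → Fin d × ℤˣ, walkOfSteps (w.1.2 0) e = w := by
  obtain ⟨⟨n, p⟩, hp⟩ := w
  choose e he using fun k : Fin n => exists_stepVec_eq (hp k)
  refine ⟨e, Subtype.ext (Sigma.ext rfl (heq_of_eq ?_))⟩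
  have hstep : (fun k => stepVec (e k)) = fun k : Fin n => -p k.castSucc + p k.succ :=
    funext fun k => (he k).trans (by ext; simp; ring)
  change pathOfSteps (p 0) e = p
  unfold pathOfSteps
  rw [hstep]
  exact Fin.partialSum_left_neg p

lemma tsum_walk_le_tsum_steps {d : ℕ} (F : W d → ℝ≥0∞) :
    ∑' w, F w ≤
      ∑' (x : Fin d → ℤ) (n : ℕ), ∑ e : Fin n → Fin d × ℤˣ, F (walkOfSteps x e) := by
  let code : (Σ (_ : Fin d → ℤ) (n : ℕ), Fin n → Fin d × ℤˣ) → W d :=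
    fun c => walkOfSteps c.1 c.2.2
  have hcode : Function.Surjective code := fun w =>
    let ⟨e, he⟩ := exists_walkOfSteps_eq w
    ⟨⟨w.1.2 0, w.1.1, e⟩, he⟩
  refine (ENNReal.tsum_le_tsum_comp_of_surjective hcode F).trans_eq ?_
  simp only [ENNReal.tsum_sigma', tsum_fintype, code]

lemma sum_exp_mul_stepVec {d : ℕ} (j : Fin d) (t : ℝ) :
    ∑ e : Fin d × ℤˣ, Real.exp (t * stepVec e j) = 2 * d + 2 * (Real.cosh t - 1) := by
  have hdir (k : Fin d) : ∑ ε : ℤˣ, Real.exp (t * stepVec (k, ε) j) =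
      2 + if j = k then 2 * (Real.cosh t - 1) else 0 := by
    rw [UnitsInt.univ, Finset.sum_pair (by decide)]
    rcases eq_or_ne j k with rfl | hjk
    · simp only [stepVec, Pi.single_eq_same, Units.val_one, Units.val_neg, Int.cast_one,
        Int.cast_neg, Real.cosh_eq, if_true]
      ring_nf
    · simp only [stepVec, Pi.single_eq_of_ne hjk, Int.cast_zero, mul_zero, Real.exp_zero, hjk,
        if_false]
      norm_num
  rw [Fintype.sum_prod_type, Finset.sum_congr rfl fun k _ => hdir k, Finset.sum_add_distrib]
  simp [mul_comm]

lemma sum_exp_mul_pathOfSteps_sub_le {d n : ℕ} (x : Fin d → ℤ) (j : Fin d) (i : Fin (n + 1))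
    (t : ℝ) :
    ∑ e : Fin n → Fin d × ℤˣ, Real.exp (t * (pathOfSteps x e i j - x j)) ≤
      (2 * d + 2 * (Real.cosh t - 1)) ^ n := by
  have hprod (e : Fin n → Fin d × ℤˣ) : Real.exp (t * (pathOfSteps x e i j - x j)) =
      ∏ k : Fin n, if (k : ℕ) < i then Real.exp (t * stepVec (e k) j) else 1 := by
    have hsum : (pathOfSteps x e i j - x j : ℝ) =
        ∑ k : Fin n with k.val < i.val, (stepVec (e k) j : ℝ) := by
      simp [pathOfSteps, Fin.partialSum, List.sum_take_ofFn]
    rw [hsum, Finset.mul_sum, Real.exp_sum, Finset.prod_filter]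
  have hcosh : 0 ≤ Real.cosh t - 1 := sub_nonneg.2 (Real.one_le_cosh t)
  calc ∑ e : Fin n → Fin d × ℤˣ, Real.exp (t * (pathOfSteps x e i j - x j))
      = ∏ k : Fin n, ∑ e : Fin d × ℤˣ,
          if (k : ℕ) < i then Real.exp (t * stepVec e j) else 1 := by
        rw [Finset.sum_congr rfl fun e _ => hprod e, Finset.prod_univ_sum, Fintype.piFinset_univ]
    _ ≤ ∏ _k : Fin n, (2 * d + 2 * (Real.cosh t - 1)) := by
        refine Finset.prod_le_prod (fun k _ => by positivity) fun k _ => ?_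
        split_ifs
        · exact (sum_exp_mul_stepVec j t).le
        · have hcard : ∑ _e : Fin d × ℤˣ, (1 : ℝ) = 2 * d := by simp [mul_comm]
          linarith
    _ = (2 * d + 2 * (Real.cosh t - 1)) ^ n := by simp

lemma card_le_mul_pathOfSteps_sub_le {d n : ℕ} (x : Fin d → ℤ) (j : Fin d) (i : Fin (n + 1))
    (t a : ℝ) :
    (Finset.card {e : Fin n → Fin d × ℤˣ | a ≤ t * (pathOfSteps x e i j - x j)} : ℝ) ≤
      (2 * d + 2 * (Real.cosh t - 1)) ^ n * Real.exp (-a) := by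
  calc (Finset.card {e : Fin n → Fin d × ℤˣ | a ≤ t * (pathOfSteps x e i j - x j)} : ℝ)
      ≤ ∑ e : Fin n → Fin d × ℤˣ,
          Real.exp (t * (pathOfSteps x e i j - x j)) * Real.exp (-a) := by
        rw [Finset.natCast_card_filter]
        refine Finset.sum_le_sum fun e _ => ?_
        rw [← Real.exp_add]
        split_ifs with he
        · exact Real.one_le_exp (by linarith)
        · exact (Real.exp_pos _).le
    _ ≤ (2 * d + 2 * (Real.cosh t - 1)) ^ n * Real.exp (-a) := by
        rw [← Finset.sum_mul]
        gcongr
        exact sum_exp_mul_pathOfSteps_sub_le x j i t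

lemma card_abs_pathOfSteps_le {d n : ℕ} (x : Fin d → ℤ) (j : Fin d) (i : Fin (n + 1)) {θ : ℝ}
    (hθ : 0 ≤ θ) (r : ℝ) :
    (Finset.card {e : Fin n → Fin d × ℤˣ | |(pathOfSteps x e i j : ℝ)| ≤ r} : ℝ) ≤
      (2 * d + 2 * (Real.cosh θ - 1)) ^ n * Real.exp (-(θ * (|(x j : ℝ)| - r))) := by
  obtain ⟨t, htx, ht, hcosh⟩ : ∃ t : ℝ, t * x j = -(θ * |(x j : ℝ)|) ∧ |t| = θ ∧
      Real.cosh t = Real.cosh θ := by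
    rcases abs_choice (x j : ℝ) with h | h
    · exact ⟨-θ, by rw [h]; ring, by rw [abs_neg, abs_of_nonneg hθ], Real.cosh_neg θ⟩
    · exact ⟨θ, by rw [h]; ring, abs_of_nonneg hθ, rfl⟩
  rw [← hcosh]
  refine le_trans ?_ (card_le_mul_pathOfSteps_sub_le x j i t _)
  refine Nat.cast_le.2 (Finset.card_le_card (Finset.monotone_filter_right _ fun e _ he => ?_))
  have htilt : -(t * pathOfSteps x e i j) ≤ θ * r :=
    calc -(t * pathOfSteps x e i j) ≤ |t * pathOfSteps x e i j| := neg_le_abs _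
      _ = θ * |(pathOfSteps x e i j : ℝ)| := by rw [abs_mul, ht]
      _ ≤ θ * r := by gcongr
  linarith

lemma card_exists_abs_pathOfSteps_le {d : ℕ} (n : ℕ) (x : Fin d → ℤ) (j : Fin d) {θ : ℝ}
    (hθ : 0 ≤ θ) (r : ℝ) :
    (Finset.card {e : Fin n → Fin d × ℤˣ | ∃ i, |(pathOfSteps x e i j : ℝ)| ≤ r} : ℝ) ≤
      (n + 1) * (2 * d + 2 * (Real.cosh θ - 1)) ^ n * Real.exp (-(θ * (|(x j : ℝ)| - r))) := by
  calc (Finset.card {e : Fin n → Fin d × ℤˣ | ∃ i, |(pathOfSteps x e i j : ℝ)| ≤ r} : ℝ)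
      ≤ ∑ i : Fin (n + 1),
          (Finset.card {e : Fin n → Fin d × ℤˣ | |(pathOfSteps x e i j : ℝ)| ≤ r} : ℝ) := by
        rw [← Nat.cast_sum]
        refine Nat.cast_le.2 ((Finset.card_le_card fun e he => ?_).trans Finset.card_biUnion_le)
        simpa using he
    _ ≤ ∑ _i : Fin (n + 1), (2 * d + 2 * (Real.cosh θ - 1)) ^ n *
          Real.exp (-(θ * (|(x j : ℝ)| - r))) :=
        Finset.sum_le_sum fun i _ => card_abs_pathOfSteps_le x j i hθ r
    _ = _ := by simp [mul_assoc]

lemma exists_lt_abs_and_sum_abs_le_of_notMem_box {d : ℕ} {ρ : ℝ} {x : Fin d → ℤ}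
    (hx : x ∉ box d ρ) : ∃ j, ρ < |(x j : ℝ)| ∧ ∑ k, |(x k : ℝ)| ≤ d * |(x j : ℝ)| := by
  obtain ⟨k, hk⟩ : ∃ k, ρ < |(x k : ℝ)| := by simpa [box] using hx
  have : Nonempty (Fin d) := ⟨k⟩
  obtain ⟨j, hj⟩ := Finite.exists_max fun j => |(x j : ℝ)|
  refine ⟨j, hk.trans_le (hj k), ?_⟩
  simpa using Finset.sum_le_card_nsmul Finset.univ _ _ fun k _ => hj k

lemma exp_neg_mul_abs_sub_le {d : ℕ} {x : Fin d → ℤ} {j : Fin d} {ρ θ : ℝ} (r : ℝ) (hθ : 0 ≤ θ)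
    (hρ : ρ ≤ |(x j : ℝ)|) (hsum : ∑ k, |(x k : ℝ)| ≤ d * |(x j : ℝ)|) :
    Real.exp (-(θ * (|(x j : ℝ)| - r))) ≤
      Real.exp (-(θ * (3 / 4 * ρ - r))) * ∏ k, Real.exp (-(θ / (4 * d)) * |(x k : ℝ)|) := by
  have hd : (0 : ℝ) < d := Nat.cast_pos.2 j.pos
  rw [← Real.exp_sum, ← Real.exp_add, ← Finset.mul_sum, Real.exp_le_exp]
  have hquarter : θ / (4 * d) * ∑ k, |(x k : ℝ)| ≤ θ / 4 * |(x j : ℝ)| :=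
    calc θ / (4 * d) * ∑ k, |(x k : ℝ)| ≤ θ / (4 * d) * (d * |(x j : ℝ)|) := by gcongr
      _ = θ / 4 * |(x j : ℝ)| := by field_simp
  have hfar : θ * ρ ≤ θ * |(x j : ℝ)| := by gcongr
  linarith

/-- The walks that start outside the box `B(ρ)` and visit the box `B(r)`. -/
def incomingWalks (d : ℕ) (ρ r : ℝ) : Set (W d) :=
  {w | w.1.2 0 ∉ box d ρ ∧ ∃ i, w.1.2 i ∈ box d r}

lemma walkOfSteps_mem_incomingWalks_iff {d n : ℕ} {x : Fin d → ℤ} {e : Fin n → Fin d × ℤˣ}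
    {ρ r : ℝ} :
    walkOfSteps x e ∈ incomingWalks d ρ r ↔ x ∉ box d ρ ∧ ∃ i, pathOfSteps x e i ∈ box d r := by
  change pathOfSteps x e 0 ∉ box d ρ ∧ (∃ i, pathOfSteps x e i ∈ box d r) ↔ _
  rw [pathOfSteps_zero]

open Classical in
lemma card_walkOfSteps_mem_incomingWalks_le {d : ℕ} (n : ℕ) (x : Fin d → ℤ) {θ : ℝ} (hθ : 0 ≤ θ)
    (ρ r : ℝ) :
    (Finset.card {e : Fin n → Fin d × ℤˣ | walkOfSteps x e ∈ incomingWalks d ρ r} : ℝ) ≤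
      (n + 1) * (2 * d + 2 * (Real.cosh θ - 1)) ^ n * Real.exp (-(θ * (3 / 4 * ρ - r))) *
        ∏ k, Real.exp (-(θ / (4 * d)) * |(x k : ℝ)|) := by
  have hcosh : 0 ≤ Real.cosh θ - 1 := sub_nonneg.2 (Real.one_le_cosh θ)
  simp only [walkOfSteps_mem_incomingWalks_iff]
  by_cases hx : x ∈ box d ρ
  · simp only [hx, not_true_eq_false, false_and, Finset.filter_false, Finset.card_empty,
      Nat.cast_zero]
    positivity
  obtain ⟨j, hρ, hsum⟩ := exists_lt_abs_and_sum_abs_le_of_notMem_box hx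
  calc (Finset.card {e : Fin n → Fin d × ℤˣ |
          x ∉ box d ρ ∧ ∃ i, pathOfSteps x e i ∈ box d r} : ℝ)
      ≤ Finset.card {e : Fin n → Fin d × ℤˣ | ∃ i, |(pathOfSteps x e i j : ℝ)| ≤ r} := by
        gcongr with e _
        exact fun he => he.2.imp fun i hi => hi j
    _ ≤ (n + 1) * (2 * d + 2 * (Real.cosh θ - 1)) ^ n * Real.exp (-(θ * (|(x j : ℝ)| - r))) := by
        convert card_exists_abs_pathOfSteps_le n x j hθ r
    _ ≤ _ := by
        rw [mul_assoc _ (Real.exp _)]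
        gcongr
        exact exp_neg_mul_abs_sub_le r hθ hρ.le hsum

lemma tilted_ratio_le {d : ℕ} (hd : 0 < d) {T θ : ℝ} (hT : 0 ≤ T) (hθ : |θ| ≤ 1)
    (hTθ : 2 * T * θ ^ 2 ≤ 1) :
    T / ((T + 1) * (2 * d)) * (2 * d + 2 * (Real.cosh θ - 1)) ≤ 1 - 1 / (2 * (T + 1)) := by
  have hd1 : (1 : ℝ) ≤ d := Nat.one_le_cast.2 hd
  have hcosh : T * (Real.cosh θ - 1) ≤ T * θ ^ 2 := by
    gcongr
    exact cosh_sub_one_le_sq hθ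
  have htilt : T * (Real.cosh θ - 1) / d ≤ 1 / 2 := by
    rw [div_le_iff₀ (by positivity)]
    linarith
  calc T / ((T + 1) * (2 * d)) * (2 * d + 2 * (Real.cosh θ - 1))
      = (T + T * (Real.cosh θ - 1) / d) / (T + 1) := by field_simp
    _ ≤ (T + 1 / 2) / (T + 1) := by
        refine div_le_div_of_nonneg_right ?_ (by positivity)
        linarith
    _ = 1 - 1 / (2 * (T + 1)) := by
        field_simp
        ring

lemma tsum_succ_mul_tilted_ratio_pow_le {d : ℕ} (hd : 0 < d) {u T θ : ℝ} (hu : 0 ≤ u) (hT : 0 ≤ T)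
    (hθ : |θ| ≤ 1) (hTθ : 2 * T * θ ^ 2 ≤ 1) :
    ∑' n : ℕ, ENNReal.ofReal (u * (2 * d / (T + 1) ^ 2) *
      ((n + 1) * (T / ((T + 1) * (2 * d)) * (2 * d + 2 * (Real.cosh θ - 1))) ^ n)) ≤
      ENNReal.ofReal (8 * d * u) := by
  have hratio := tilted_ratio_le hd hT hθ hTθ
  have hcosh : 0 ≤ Real.cosh θ - 1 := sub_nonneg.2 (Real.one_le_cosh θ)
  set q := T / ((T + 1) * (2 * d)) * (2 * d + 2 * (Real.cosh θ - 1))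
  have hq0 : 0 ≤ q := by positivity
  have hgap : 0 < 1 / (2 * (T + 1)) := by positivity
  have hsum : HasSum (fun n : ℕ => (n + 1) * q ^ n) (1 / (1 - q) ^ 2) := by
    simpa using hasSum_choose_mul_geometric_of_norm_lt_one 1
      (by rw [Real.norm_of_nonneg hq0]; linarith : ‖q‖ < 1)
  have hsum_mul := hsum.mul_left (u * (2 * d / (T + 1) ^ 2))
  rw [← ENNReal.ofReal_tsum_of_nonneg (fun n => by positivity) hsum_mul.summable,
    hsum_mul.tsum_eq]
  refine ENNReal.ofReal_le_ofReal ?_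
  calc u * (2 * d / (T + 1) ^ 2) * (1 / (1 - q) ^ 2)
      ≤ u * (2 * d / (T + 1) ^ 2) * (1 / (1 / (2 * (T + 1))) ^ 2) := by
        gcongr
        linarith
    _ = 8 * d * u := by
        field_simp
        norm_num

lemma sum_indicator_intensity_walkOfSteps_le {d : ℕ} (n : ℕ) (x : Fin d → ℤ) {u T θ : ℝ}
    (hu : 0 ≤ u) (hT : 0 ≤ T) (hθ : 0 ≤ θ) (ρ r : ℝ) :
    ∑ e : Fin n → Fin d × ℤˣ, (incomingWalks d ρ r).indicator
        (fun w => ENNReal.ofReal (intensity d u T w)) (walkOfSteps x e) ≤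
      ENNReal.ofReal (u * (2 * d / (T + 1) ^ 2) *
        ((n + 1) * (T / ((T + 1) * (2 * d)) * (2 * d + 2 * (Real.cosh θ - 1))) ^ n)) *
      (ENNReal.ofReal (Real.exp (-(θ * (3 / 4 * ρ - r)))) *
        ∏ k, ENNReal.ofReal (Real.exp (-(θ / (4 * d)) * |(x k : ℝ)|))) := by
  classical
  have hcosh : 0 ≤ Real.cosh θ - 1 := sub_nonneg.2 (Real.one_le_cosh θ)
  set c := u * (2 * d / (T + 1) ^ 2) * (T / ((T + 1) * (2 * d))) ^ n with hc
  have hintensity (e : Fin n → Fin d × ℤˣ) : intensity d u T (walkOfSteps x e) = c := rfl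
  simp only [Set.indicator_apply, hintensity]
  rw [← Finset.sum_filter, Finset.sum_const, nsmul_eq_mul, ← ENNReal.ofReal_natCast,
    ← ENNReal.ofReal_mul (by positivity), ← ENNReal.ofReal_prod_of_nonneg fun _ _ => by positivity,
    ← ENNReal.ofReal_mul (by positivity), ← ENNReal.ofReal_mul (by positivity)]
  refine ENNReal.ofReal_le_ofReal ?_
  calc _ ≤ (n + 1) * (2 * d + 2 * (Real.cosh θ - 1)) ^ n * Real.exp (-(θ * (3 / 4 * ρ - r))) *
        (∏ k, Real.exp (-(θ / (4 * d)) * |(x k : ℝ)|)) * c := by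
        gcongr
        exact card_walkOfSteps_mem_incomingWalks_le n x hθ ρ r
    _ = _ := by
        rw [hc, mul_pow]
        ring

lemma tsum_indicator_intensity_incomingWalks_le {d : ℕ} (hd : 0 < d) {u T θ : ℝ} (hu : 0 ≤ u)
    (hT : 0 ≤ T) (hθ0 : 0 < θ) (hθ1 : θ ≤ 1) (hTθ : 2 * T * θ ^ 2 ≤ 1) (ρ r : ℝ) :
    ∑' w, (incomingWalks d ρ r).indicator (fun w => ENNReal.ofReal (intensity d u T w)) w ≤
      ENNReal.ofReal
        (8 * d * u * Real.exp (-(θ * (3 / 4 * ρ - r))) * (1 + 8 * d / θ) ^ d) := by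
  have hlengths := tsum_succ_mul_tilted_ratio_pow_le hd hu hT (abs_le.2 ⟨by linarith, hθ1⟩) hTθ
  have hstarts : ∑' x : Fin d → ℤ, ∏ k, ENNReal.ofReal (Real.exp (-(θ / (4 * d)) * |(x k : ℝ)|)) ≤
      ENNReal.ofReal (1 + 8 * d / θ) ^ d := by
    rw [tsum_prod_apply_eq_prod_tsum fun (_ : Fin d) (z : ℤ) =>
        ENNReal.ofReal (Real.exp (-(θ / (4 * d)) * |(z : ℝ)|)),
      Finset.prod_const, Finset.card_univ, Fintype.card_fin]
    gcongr
    refine (tsum_exp_neg_mul_abs_int_le (by positivity)).trans_eq ?_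
    congr 2
    field_simp
    norm_num
  refine (tsum_walk_le_tsum_steps _).trans ?_
  refine (ENNReal.tsum_le_tsum fun x => ENNReal.tsum_le_tsum fun n =>
    sum_indicator_intensity_walkOfSteps_le n x hu hT hθ0.le ρ r).trans ?_
  rw [ENNReal.ofReal_mul (by positivity), ENNReal.ofReal_mul (by positivity),
    ENNReal.ofReal_pow (by positivity), mul_assoc]
  simp only [ENNReal.tsum_mul_right, ENNReal.tsum_mul_left]
  gcongr

namespace IsFRI

variable {d : ℕ} {u T : ℝ} {μ : Measure (W d → ℕ)}

lemma measure_one_le_apply_le (h : IsFRI d u T μ) (w : W d) :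
    μ {ω | 1 ≤ ω w} ≤ ENNReal.ofReal (intensity d u T w) := by
  have := h.1
  have hzero : μ {ω | ω w = 0} = ENNReal.ofReal (Real.exp (-intensity d u T w)) := by
    simpa using h.2 {w} 0
  have hmeas : MeasurableSet {ω : W d → ℕ | ω w = 0} :=
    measurable_pi_apply w (measurableSet_singleton 0)
  have hcompl : {ω : W d → ℕ | 1 ≤ ω w} = {ω | ω w = 0}ᶜ :=
    Set.ext fun ω => Nat.one_le_iff_ne_zero
  rw [hcompl, prob_compl_eq_one_sub hmeas, hzero, ← ENNReal.ofReal_one,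
    ← ENNReal.ofReal_sub _ (Real.exp_pos _).le]
  exact ENNReal.ofReal_le_ofReal (by linarith [Real.add_one_le_exp (-intensity d u T w)])

lemma measure_exists_mem_le (h : IsFRI d u T μ) (S : Set (W d)) :
    μ {ω | ∃ w ∈ S, 1 ≤ ω w} ≤
      ∑' w, S.indicator (fun w => ENNReal.ofReal (intensity d u T w)) w := by
  have hunion : {ω : W d → ℕ | ∃ w ∈ S, 1 ≤ ω w} = ⋃ w ∈ S, {ω | 1 ≤ ω w} := by
    ext ω
    simp
  rw [hunion, ← tsum_subtype]
  exact (measure_biUnion_le μ S.to_countable _).trans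
    (ENNReal.tsum_le_tsum fun w => h.measure_one_le_apply_le w)

lemma measure_badEvent_le {R : ℕ} (h : IsFRI d u (R ^ 3 : ℕ) μ) (hd : 0 < d) (hu : 0 ≤ u)
    (hR : 1 ≤ R) :
    μ {ω | BadEvent d R ω} ≤
      ENNReal.ofReal (8 * d * u * Real.exp (-16 * √R) * (17 * d * (R : ℝ) ^ 2) ^ d) := by
  have hR1 : (1 : ℝ) ≤ R := Nat.one_le_cast.2 hR
  have hsqrt1 : 1 ≤ √(R : ℝ) := Real.one_le_sqrt.2 hR1
  have hsqrtR : √(R : ℝ) ≤ R := Real.sqrt_le_self_iff.2 (Or.inr hR1)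
  have hsq : √(R : ℝ) ^ 2 = R := Real.sq_sqrt (Nat.cast_nonneg R)
  have hRsqrt1 : 1 ≤ R * √(R : ℝ) := one_le_mul_of_one_le_of_one_le hR1 hsqrt1
  set θ : ℝ := 1 / (2 * (R * √R)) with hθ
  have hTθ : 2 * ((R ^ 3 : ℕ) : ℝ) * θ ^ 2 ≤ 1 := by
    rw [hθ, div_pow, mul_pow, mul_pow, hsq]
    push_cast
    field_simp
    norm_num
  have hexponent : θ * (3 / 4 * (128 * R ^ 2) - 64 * R ^ 2) = 16 * √R := by
    rw [hθ]
    field_simp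
    linarith
  have hbase : 1 + 8 * d / θ ≤ 17 * d * (R : ℝ) ^ 2 := by
    have hd1 : (1 : ℝ) ≤ d := Nat.one_le_cast.2 hd
    calc 1 + 8 * d / θ = 1 + 16 * d * (R * √R) := by rw [hθ]; field_simp; ring
      _ ≤ d * (R : ℝ) ^ 2 + 16 * d * (R * R) := by
        gcongr
        exact one_le_mul_of_one_le_of_one_le hd1 (one_le_pow₀ hR1)
      _ = 17 * d * (R : ℝ) ^ 2 := by ring
  calc μ {ω | BadEvent d R ω}
      ≤ μ {ω | ∃ w ∈ incomingWalks d (128 * R ^ 2) (64 * R ^ 2), 1 ≤ ω w} :=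
        measure_mono fun _ ⟨w, hocc, hin⟩ => ⟨w, hin, hocc⟩
    _ ≤ ENNReal.ofReal (8 * d * u *
          Real.exp (-(θ * (3 / 4 * (128 * R ^ 2) - 64 * R ^ 2))) * (1 + 8 * d / θ) ^ d) :=
        (h.measure_exists_mem_le _).trans <|
          tsum_indicator_intensity_incomingWalks_le hd hu (Nat.cast_nonneg _) (by positivity)
            (div_le_one_of_le₀ (by linarith) (by positivity)) hTθ _ _
    _ ≤ _ := by
        rw [hexponent, ← neg_mul]
        gcongr

end IsFRI

/-- The `m`-th summand, indexed from `0`, of the series in the union bound over the annuli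
`A(m + 1, R)`. -/
def unionBoundTerm (d : ℕ) (u c₁ c₂ c₃ c₄ : ℝ) (R m : ℕ) : ℝ :=
  c₄ * (m + 1 : ℝ) ^ d * (R : ℝ) ^ (2 * d) * c₁ * Real.exp (-c₂ * (m + 1) * R) +
    c₄ * (m + 1 : ℝ) ^ d * (R : ℝ) ^ (2 * d) *
      (2 * d * u * (m + 1) * (R : ℝ) ^ 4 / ((R : ℝ) ^ 3 + 1)) *
      Real.exp (-c₃ * (m + 1) * Real.sqrt R)

lemma summable_succ_pow_mul_exp_neg (k : ℕ) {c : ℝ} (hc : 0 < c) :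
    Summable fun m : ℕ => (m + 1 : ℝ) ^ k * Real.exp (-c * (m + 1)) := by
  simpa using (summable_nat_add_iff 1).2 (Real.summable_pow_mul_exp_neg_nat_mul k hc)

lemma tendsto_natCast_pow_mul_exp_neg_mul_sqrt (k : ℕ) {c : ℝ} (hc : 0 < c) :
    Tendsto (fun R : ℕ => (R : ℝ) ^ k * Real.exp (-c * √R)) atTop (nhds 0) := by
  have hsqrt : Tendsto (fun R : ℕ => √(R : ℝ)) atTop atTop :=
    Real.tendsto_sqrt_atTop.comp tendsto_natCast_atTop_atTop
  refine ((tendsto_rpow_mul_exp_neg_mul_atTop_nhds_zero (2 * k : ℕ) c hc).comp hsqrt).congr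
    fun R => ?_
  rw [Function.comp_apply, Real.rpow_natCast, pow_mul, Real.sq_sqrt (Nat.cast_nonneg R)]

section UnionBound

variable {d : ℕ} {u c₁ c₂ c₃ c₄ : ℝ}

lemma unionBoundTerm_nonneg (hu : 0 ≤ u) (hc₁ : 0 ≤ c₁) (hc₄ : 0 ≤ c₄) (R m : ℕ) :
    0 ≤ unionBoundTerm d u c₁ c₂ c₃ c₄ R m := by
  unfold unionBoundTerm
  positivity

lemma exp_neg_mul_mul_le {c a b : ℝ} (hc : 0 ≤ c) (ha : 1 ≤ a) (hb : 1 ≤ b) :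
    Real.exp (-c * a * b) ≤ Real.exp (-(c / 2) * b) * Real.exp (-(c / 2) * a) := by
  rw [← Real.exp_add, Real.exp_le_exp]
  have hsum : c * (a + b) ≤ c * (2 * (a * b)) := by
    gcongr
    nlinarith
  linarith

lemma unionBoundTerm_le {c : ℝ} (hu : 0 ≤ u) (hc₁ : 0 ≤ c₁) (hc₄ : 0 ≤ c₄) (hc : 0 ≤ c)
    (hc₂ : c ≤ c₂) (hc₃ : c ≤ c₃) {R : ℕ} (hR : 1 ≤ R) (m : ℕ) :
    unionBoundTerm d u c₁ c₂ c₃ c₄ R m ≤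
      c₄ * (c₁ + 2 * d * u) * ((R : ℝ) ^ (2 * d + 4) * Real.exp (-(c / 2) * √R)) *
        ((m + 1 : ℝ) ^ (d + 1) * Real.exp (-(c / 2) * (m + 1))) := by
  have hR1 : (1 : ℝ) ≤ R := Nat.one_le_cast.2 hR
  have hm1 : (1 : ℝ) ≤ m + 1 := le_add_of_nonneg_left (Nat.cast_nonneg m)
  have hsqrt1 : 1 ≤ √(R : ℝ) := Real.one_le_sqrt.2 hR1
  have hsqrtR : √(R : ℝ) ≤ R := Real.sqrt_le_self_iff.2 (Or.inr hR1)
  have hc₂0 : 0 ≤ c₂ := hc.trans hc₂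
  have hsplit := exp_neg_mul_mul_le hc hm1 hsqrt1
  set E := Real.exp (-(c / 2) * √R) * Real.exp (-(c / 2) * (m + 1)) with hE
  have hexp₂ : Real.exp (-c₂ * (m + 1) * R) ≤ E :=
    le_trans (by simp only [neg_mul]; gcongr) hsplit
  have hexp₃ : Real.exp (-c₃ * (m + 1) * √R) ≤ E :=
    le_trans (by simp only [neg_mul]; gcongr) hsplit
  have hfrac : 2 * d * u * (m + 1) * (R : ℝ) ^ 4 / ((R : ℝ) ^ 3 + 1) ≤
      2 * d * u * (m + 1) * (R : ℝ) ^ 4 :=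
    div_le_self (by positivity) (le_add_of_nonneg_left (by positivity))
  have hc₁_le : c₁ ≤ c₁ * ((m + 1) * (R : ℝ) ^ 4) :=
    le_mul_of_one_le_right hc₁ (one_le_mul_of_one_le_of_one_le hm1 (one_le_pow₀ hR1))
  calc unionBoundTerm d u c₁ c₂ c₃ c₄ R m
      ≤ c₄ * (m + 1 : ℝ) ^ d * (R : ℝ) ^ (2 * d) * (c₁ * ((m + 1) * (R : ℝ) ^ 4)) * E +
        c₄ * (m + 1 : ℝ) ^ d * (R : ℝ) ^ (2 * d) * (2 * d * u * (m + 1) * (R : ℝ) ^ 4) * E := by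
        unfold unionBoundTerm
        gcongr
    _ = _ := by
        rw [hE]
        ring

lemma summable_unionBoundTerm (hu : 0 ≤ u) (hc₁ : 0 ≤ c₁) (hc₂ : 0 < c₂) (hc₃ : 0 < c₃)
    (hc₄ : 0 ≤ c₄) {R : ℕ} (hR : 1 ≤ R) : Summable (unionBoundTerm d u c₁ c₂ c₃ c₄ R) :=
  have hmin : 0 < min c₂ c₃ := lt_min hc₂ hc₃
  .of_nonneg_of_le (unionBoundTerm_nonneg hu hc₁ hc₄ R)
    (unionBoundTerm_le hu hc₁ hc₄ hmin.le (min_le_left _ _) (min_le_right _ _) hR)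
    ((summable_succ_pow_mul_exp_neg (d + 1) (half_pos hmin)).mul_left _)

lemma tendsto_tsum_unionBoundTerm (hu : 0 ≤ u) (hc₁ : 0 ≤ c₁) (hc₂ : 0 < c₂) (hc₃ : 0 < c₃)
    (hc₄ : 0 ≤ c₄) :
    Tendsto (fun R : ℕ => ∑' m : ℕ, unionBoundTerm d u c₁ c₂ c₃ c₄ R m) atTop (nhds 0) := by
  set c := min c₂ c₃
  have hc : 0 < c := lt_min hc₂ hc₃
  have hlim : Tendsto (fun R : ℕ => c₄ * (c₁ + 2 * d * u) *
      ((R : ℝ) ^ (2 * d + 4) * Real.exp (-(c / 2) * √R)) *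
      ∑' m : ℕ, (m + 1 : ℝ) ^ (d + 1) * Real.exp (-(c / 2) * (m + 1))) atTop (nhds 0) := by
    simpa using ((tendsto_natCast_pow_mul_exp_neg_mul_sqrt (2 * d + 4) (half_pos hc)).const_mul
      (c₄ * (c₁ + 2 * d * u))).mul_const _
  refine squeeze_zero' (.of_forall fun R => tsum_nonneg (unionBoundTerm_nonneg hu hc₁ hc₄ R)) ?_
    hlim
  filter_upwards [eventually_ge_atTop 1] with R hR
  rw [← tsum_mul_left]
  exact (summable_unionBoundTerm hu hc₁ hc₂ hc₃ hc₄ hR).tsum_le_tsum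
    (unionBoundTerm_le hu hc₁ hc₄ hc.le (min_le_left _ _) (min_le_right _ _) hR)
    ((summable_succ_pow_mul_exp_neg (d + 1) (half_pos hc)).mul_left _)

lemma le_tsum_unionBoundTerm (hu : 0 ≤ u) (hc₁ : 0 ≤ c₁) (hc₂ : 0 < c₂) (hc₃ : 0 < c₃)
    (hc₄ : 0 ≤ c₄) {R : ℕ} (hR : 1 ≤ R) :
    c₄ * (R : ℝ) ^ (2 * d) * (d * u) * Real.exp (-c₃ * √R) ≤
      ∑' m : ℕ, unionBoundTerm d u c₁ c₂ c₃ c₄ R m := by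
  have hR1 : (1 : ℝ) ≤ R := Nat.one_le_cast.2 hR
  have hfrac : d * u ≤ 2 * d * u * (R : ℝ) ^ 4 / ((R : ℝ) ^ 3 + 1) := by
    rw [le_div_iff₀ (by positivity)]
    have hpow : (R : ℝ) ^ 3 + 1 ≤ 2 * (R : ℝ) ^ 4 := by
      linarith [one_le_pow₀ hR1 (n := 4), pow_le_pow_right₀ hR1 (by norm_num : 3 ≤ 4)]
    calc d * u * ((R : ℝ) ^ 3 + 1) ≤ d * u * (2 * (R : ℝ) ^ 4) := by gcongr
      _ = 2 * d * u * (R : ℝ) ^ 4 := by ring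
  calc c₄ * (R : ℝ) ^ (2 * d) * (d * u) * Real.exp (-c₃ * √R)
      ≤ c₄ * (R : ℝ) ^ (2 * d) * (2 * d * u * (R : ℝ) ^ 4 / ((R : ℝ) ^ 3 + 1)) *
        Real.exp (-c₃ * √R) := by gcongr
    _ ≤ unionBoundTerm d u c₁ c₂ c₃ c₄ R 0 := by
        simp only [unionBoundTerm, Nat.cast_zero, zero_add, one_pow, mul_one]
        exact le_add_of_nonneg_left (by positivity)
    _ ≤ _ := (summable_unionBoundTerm hu hc₁ hc₂ hc₃ hc₄ hR).le_tsum 0 fun m _ =>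
        unionBoundTerm_nonneg hu hc₁ hc₄ R m

end UnionBound

theorem fri_no_far_walks_general (d : ℕ) (hd : 0 < d) (u : ℝ) (hu : 0 ≤ u) :
    ∃ c₁ > (0 : ℝ), ∃ c₂ > (0 : ℝ), ∃ c₃ > (0 : ℝ), ∃ c₄ > (0 : ℝ),
      (∀ R : ℕ, 1 ≤ R → ∀ μ : Measure (W d → ℕ), IsFRI d u (R ^ 3 : ℕ) μ →
        μ {ω | BadEvent d R ω} ≤
          ENNReal.ofReal (∑' m : ℕ, unionBoundTerm d u c₁ c₂ c₃ c₄ R m)) ∧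
      Tendsto (fun R : ℕ => ∑' m : ℕ, unionBoundTerm d u c₁ c₂ c₃ c₄ R m) atTop (nhds 0) := by
  refine ⟨1, one_pos, 1, one_pos, 16, by norm_num, 8 * (17 * d) ^ d, by positivity,
    fun R hR μ h => ?_, tendsto_tsum_unionBoundTerm hu zero_le_one one_pos (by norm_num)
      (by positivity)⟩
  refine (h.measure_badEvent_le hd hu hR).trans (ENNReal.ofReal_le_ofReal ?_)
  calc 8 * d * u * Real.exp (-16 * √R) * (17 * d * (R : ℝ) ^ 2) ^ d
      = 8 * (17 * d : ℝ) ^ d * (R : ℝ) ^ (2 * d) * (d * u) * Real.exp (-16 * √R) := by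
        rw [mul_pow _ ((R : ℝ) ^ 2), ← pow_mul]
        ring
    _ ≤ _ := le_tsum_unionBoundTerm hu zero_le_one one_pos (by norm_num) (by positivity) hR

/-- Union bound for walks from far away reaching `B̂(R)` in `FI^{u,R³}`: there are positive
constants `c₁, …, c₄` (depending on `u, d`) such that for every `R ≥ 1` the probability that
some killed walk starting in `ℤ^d ∖ B(128R²)` reaches `B̂(R)` is at most
`Σ_{m≥1} (c₄ m^d R^{2d} c₁ e^{-c₂ m R} + c₄ m^d R^{2d} (2dumR⁴/(R³+1)) e^{-c₃ m R^{1/2}})`,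
and this bound tends to `0` as `R → ∞`. -/
theorem fri_no_far_walks (d : ℕ) (hd : 3 ≤ d) (u : ℝ) (hu : 0 < u) :
    ∃ c₁ > (0 : ℝ), ∃ c₂ > (0 : ℝ), ∃ c₃ > (0 : ℝ), ∃ c₄ > (0 : ℝ),
      (∀ R : ℕ, 1 ≤ R → ∀ μ : Measure (W d → ℕ), IsFRI d u (R ^ 3 : ℕ) μ →
        μ {ω | BadEvent d R ω} ≤ ENNReal.ofReal (∑' m : ℕ,
          (c₄ * (m + 1 : ℝ) ^ d * (R : ℝ) ^ (2 * d) * c₁ * Real.exp (-c₂ * (m + 1) * R) +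
           c₄ * (m + 1 : ℝ) ^ d * (R : ℝ) ^ (2 * d) *
             (2 * d * u * (m + 1) * (R : ℝ) ^ 4 / ((R : ℝ) ^ 3 + 1)) *
             Real.exp (-c₃ * (m + 1) * Real.sqrt R)))) ∧
      Tendsto (fun R : ℕ => ∑' m : ℕ,
          (c₄ * (m + 1 : ℝ) ^ d * (R : ℝ) ^ (2 * d) * c₁ * Real.exp (-c₂ * (m + 1) * R) +
           c₄ * (m + 1 : ℝ) ^ d * (R : ℝ) ^ (2 * d) *
             (2 * d * u * (m + 1) * (R : ℝ) ^ 4 / ((R : ℝ) ^ 3 + 1)) *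
             Real.exp (-c₃ * (m + 1) * Real.sqrt R)))
        atTop (nhds 0) :=
  fri_no_far_walks_general d (by lia) u hu.le

end
end
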